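/- Let n ≥ 1 and let f, g, δ, d ∈ ℂ[[x]] satisfy fg = 1 + δ x^n and d ≡ −δ + δ^2 x^n (mod x^{2n}). Then f · (g + g·d·x^n) ≡ 1 (mod x^{3n}). -/

import Mathlib

/-- correctness of the final extension step of the reciprocal
algorithm.  If `f·g = 1 + δ·xⁿ` and `d ≡ -δ + δ²xⁿ (mod x^{2n})`, then
`f·(g + g·d·xⁿ) ≡ 1 (mod x^{3n})`. -/
theorem reciprocal_extension_step (n : ℕ) (hn : 1 ≤ n) (f g δ d : PowerSeries ℂ)
    (h : f * g = 1 + δ * PowerSeries.X ^ n)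
    (hd : (PowerSeries.X : PowerSeries ℂ) ^ (2 * n) ∣
      (d - (-δ + δ ^ 2 * PowerSeries.X ^ n))) :
    (PowerSeries.X : PowerSeries ℂ) ^ (3 * n) ∣
      (f * (g + g * d * PowerSeries.X ^ n) - 1) := by
  obtain ⟨e, he⟩ := hd
  have h3 : (PowerSeries.X : PowerSeries ℂ) ^ (3 * n) = (PowerSeries.X ^ n) ^ 3 := by
    rw [← pow_mul, mul_comm]
  have h2 : (PowerSeries.X : PowerSeries ℂ) ^ (2 * n) = (PowerSeries.X ^ n) ^ 2 := by
    rw [← pow_mul, mul_comm]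
  rw [h2] at he
  rw [h3]
  generalize (PowerSeries.X : PowerSeries ℂ) ^ n = y at *
  refine ⟨δ ^ 3 + (1 + δ * y) * e, ?_⟩
  linear_combination (1 + d * y) * h + (1 + δ * y) * y * he
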